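/- The function n ↦ (∑_{k=0}^{n-1} C(2k,k))/(n² C(2n,n)) on positive integers is uniformly continuous for the 3-adic metric: for all s, if m ≡ n (mod 3^s) with m, n ≥ 1, then f₁(m) ≡ f₁(n) (mod 3^{s'}) for some s' → ∞ as s → ∞; hence it extends to a continuous function f₁ : ℤ₃ → ℚ₃. -/

import Mathlib

/-!
Put `M x n = ∫₀¹ (1 + x t (1 - t))ⁿ dt`. Integration by parts yields a first-order recursion for
`M (-3)`, which identifies `∑ k ≤ n, C(2k, k)` with `(2n + 1) C(2n, n) M (-3) n`, so the quotient
in question at `n + 1` is `M (-3) n / (2 (n + 1))`. Expanding binomially and summing by parts, its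
`k`-th Mahler coefficient is, up to a constant and sign, `(∑ j ≤ k, 3ʲ B(j + 1, j + 1)) / (k + 1)`.

These coefficients tend to `0` because the full series `∑ 3ʲ B(j + 1, j + 1)`, which converges
geometrically in `ℚ₃`, has sum `0`: weighting its terms by truncated sine products at a positive
integer `n` turns it into `B_{n-1}(-3) / n` for a Morgan-Voyce polynomial, which vanishes whenever
`3 ∣ n` since cube roots of unity are involved; then let `n → 0` in `ℤ₃`. Archimedeanly this is
`(sin (n θ) / sin θ) / n → θ / sin θ` with `θ` replaced by the `3`-adic logarithm of a root of
unity.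
-/

open Filter Finset Topology

lemma two_mul_add_one_mul_centralBinom (k : ℕ) :
    (2 * k + 1) * k.centralBinom = (k + 1) * (2 * k + 1).choose k := by
  rw [Nat.centralBinom_eq_two_mul_choose, Nat.add_one_mul_choose_eq, Nat.choose_symm_half,
    mul_comm]

lemma cast_two_mul_add_one_mul_centralBinom_ne_zero (R : Type*) [AddMonoidWithOne R] [CharZero R]
    (k : ℕ) : (((2 * k + 1) * k.centralBinom : ℕ) : R) ≠ 0 :=
  Nat.cast_ne_zero.mpr (mul_ne_zero (2 * k).succ_ne_zero k.centralBinom_ne_zero)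

lemma cast_succ_mul_centralBinom_succ (R : Type*) [CommSemiring R] (k : ℕ) :
    ((k + 1) * (k + 1).centralBinom : R) = 2 * (2 * k + 1) * k.centralBinom := by
  exact_mod_cast congrArg (Nat.cast : ℕ → R) k.succ_mul_centralBinom_succ

lemma cast_choose_mul_succ_eq (R : Type*) [CommRing R] (n k : ℕ) :
    (n.choose k * (n + 1) : R) = (n + 1).choose k * (n + 1 - k) := by
  rcases le_or_gt k (n + 1) with hk | hk
  · have h := congrArg (Nat.cast : ℕ → R) (n.choose_mul_succ_eq k)
    simpa only [Nat.cast_mul, Nat.cast_sub hk, Nat.cast_add, Nat.cast_one] using h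
  · simp [Nat.choose_eq_zero_of_lt hk, Nat.choose_eq_zero_of_lt (Nat.lt_of_succ_lt hk)]

lemma choose_add_two_add_choose (n k : ℕ) :
    (n + 2).choose (k + 2) + n.choose (k + 2) = 2 * (n + 1).choose (k + 2) + n.choose k := by
  simp only [Nat.choose_succ_succ']
  ring

lemma succ_mul_choose_mul_choose_add (m k : ℕ) :
    (m + 1) * m.choose k * (m + 1 + k).choose k
      = (2 * k + 1) * k.centralBinom * (m + 1 + k).choose (2 * k + 1) := by
  have hsplit : (m + 1 + k).choose (2 * k + 1) * (2 * k + 1).choose k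
      = (m + 1 + k).choose k * (m + 1).choose (k + 1) := by
    rw [Nat.choose_mul (by lia)]
    congr 2 <;> lia
  linear_combination (m + 1 + k).choose k * Nat.add_one_mul_choose_eq m k
    - (k + 1) * hsplit - (m + 1 + k).choose (2 * k + 1) * two_mul_add_one_mul_centralBinom k

lemma sum_neg_one_pow_mul_choose_mul_sum_range {R : Type*} [CommRing R] (d : ℕ → R) (n N : ℕ) :
    ∑ k ∈ range N, (-1) ^ k * (n + 1).choose (k + 1) * ∑ j ∈ range (k + 1), d j
      = ∑ k ∈ range N, (-1) ^ k * n.choose k * d k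
        - (-1) ^ N * n.choose N * ∑ j ∈ range N, d j := by
  induction N with
  | zero => simp
  | succ N ih =>
    simp only [sum_range_succ, Nat.choose_succ_succ'] at ih ⊢
    rw [ih]
    push_cast
    ring

section CentralBeta

/-- The Beta value `B(k + 1, k + 1) = ∫₀¹ tᵏ (1 - t)ᵏ dt = k!² / (2k + 1)!`, as an element of `K`;
meant for characteristic zero, since the inverse is the junk value `0` where `2k + 1` or
`C(2k, k)` vanishes in `K`. -/
def centralBeta (K : Type*) [DivisionRing K] (k : ℕ) : K :=
  (((2 * k + 1) * k.centralBinom : ℕ) : K)⁻¹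

/-- The moment `∫₀¹ (1 + x t (1 - t))ⁿ dt`, expanded by the binomial theorem so that it makes sense
over an arbitrary field. -/
def centralBetaMoment {K : Type*} [Field K] (x : K) (n : ℕ) : K :=
  ∑ k ∈ range (n + 1), n.choose k * (x ^ k * centralBeta K k)

/-- The `k`-th Mahler coefficient of `n ↦ centralBetaMoment (-q) n / (n + 1)`. -/
def momentMahlerCoeff {K : Type*} [Field K] (q : K) (k : ℕ) : K :=
  (-1) ^ k * (∑ j ∈ range (k + 1), q ^ j * centralBeta K j) / (k + 1)

variable {K : Type*} [Field K] [CharZero K]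

lemma centralBeta_succ (k : ℕ) :
    (4 * k + 6) * centralBeta K (k + 1) = (k + 1) * centralBeta K k := by
  have hne := cast_two_mul_add_one_mul_centralBinom_ne_zero K
  rw [centralBeta, centralBeta, ← div_eq_mul_inv, ← div_eq_mul_inv,
    div_eq_div_iff (hne _) (hne _)]
  push_cast
  linear_combination (-(2 * k + 3 : K)) * cast_succ_mul_centralBinom_succ K k

/- Integrating the derivative of `(t - 1/2) (1 + x t (1 - t))ⁿ⁺¹` over `[0, 1]` gives
`centralBetaMoment_succ`; the boundary term below is its discrete counterpart. -/
lemma sum_range_centralBetaMoment_succ (x : K) (n N : ℕ) :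
    ∑ k ∈ range N, ((4 * n + 6) * (n + 1).choose k - (n + 1) * (x + 4) * n.choose k)
        * (x ^ k * centralBeta K k)
      = 2 - (4 * N + 2) * (n + 1).choose N * (x ^ N * centralBeta K N) := by
  induction N with
  | zero => simp [centralBeta]
  | succ N ih =>
    have habsorb : (n + 1 : K) * n.choose N = (n + 1).choose (N + 1) * (N + 1) := by
      exact_mod_cast Nat.add_one_mul_choose_eq n N
    rw [sum_range_succ, ih, pow_succ]
    push_cast
    linear_combination (-4 * x ^ N * centralBeta K N) * cast_choose_mul_succ_eq K n N
      - x ^ N * x * centralBeta K N * habsorb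
      + (n + 1).choose (N + 1) * x ^ N * x * centralBeta_succ (K := K) N

lemma centralBetaMoment_succ (x : K) (n : ℕ) :
    (4 * n + 6) * centralBetaMoment x (n + 1) = (n + 1) * (x + 4) * centralBetaMoment x n + 2 := by
  have h := sum_range_centralBetaMoment_succ x n (n + 2)
  have hlast : centralBetaMoment x n
      = ∑ k ∈ range (n + 2), n.choose k * (x ^ k * centralBeta K k) := by
    simp [centralBetaMoment, sum_range_succ _ (n + 1)]
  simp only [sub_mul, mul_assoc, sum_sub_distrib, ← mul_sum, Nat.choose_succ_self] at h
  rw [hlast, centralBetaMoment]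
  linear_combination h

theorem sum_centralBinom_mul_pow (x : K) (n : ℕ) :
    ∑ k ∈ range (n + 1), k.centralBinom * (x + 4) ^ (n - k)
      = (2 * n + 1) * n.centralBinom * centralBetaMoment x n := by
  induction n with
  | zero => simp [centralBetaMoment, centralBeta]
  | succ n ih =>
    have hfactor : ∑ k ∈ range (n + 1), (k.centralBinom : K) * (x + 4) ^ (n + 1 - k)
        = (x + 4) * ∑ k ∈ range (n + 1), k.centralBinom * (x + 4) ^ (n - k) := by
      rw [mul_sum]
      refine sum_congr rfl fun k hk => ?_
      rw [Nat.succ_sub (mem_range_succ_iff.mp hk), pow_succ]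
      ring
    rw [sum_range_succ, hfactor, ih]
    apply mul_left_cancel₀ (two_ne_zero (α := K))
    push_cast
    simp only [Nat.sub_self, pow_zero]
    linear_combination (-(x + 4) * centralBetaMoment x n) * cast_succ_mul_centralBinom_succ K n
      - (n + 1).centralBinom * centralBetaMoment_succ x n

lemma sum_centralBinom_div_sq (n : ℕ) :
    (∑ k ∈ range (n + 1), (k.centralBinom : K)) / ((n + 1) ^ 2 * (n + 1).centralBinom)
      = 2⁻¹ * (centralBetaMoment (-3) n / (n + 1)) := by
  have hsum : ∑ k ∈ range (n + 1), (k.centralBinom : K)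
      = (2 * n + 1) * n.centralBinom * centralBetaMoment (-3) n := by
    rw [← sum_centralBinom_mul_pow]
    norm_num
  have hn : (n + 1 : K) ≠ 0 := n.cast_add_one_ne_zero
  have hc : ((n + 1).centralBinom : K) ≠ 0 := by exact_mod_cast (n + 1).centralBinom_ne_zero
  rw [hsum]
  field_simp
  linear_combination (-centralBetaMoment (-3 : K) n) * cast_succ_mul_centralBinom_succ K n

lemma sum_choose_mul_momentMahlerCoeff (q : K) (n : ℕ) :
    ∑ k ∈ range (n + 1), n.choose k * momentMahlerCoeff q k
      = centralBetaMoment (-q) n / (n + 1) := by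
  have hn : (n + 1 : K) ≠ 0 := n.cast_add_one_ne_zero
  have hparts := sum_neg_one_pow_mul_choose_mul_sum_range
    (fun k => q ^ k * centralBeta K k) n (n + 1)
  have hmoment : centralBetaMoment (-q) n
      = ∑ k ∈ range (n + 1), (-1) ^ k * n.choose k * (q ^ k * centralBeta K k) :=
    sum_congr rfl fun k _ => by rw [neg_pow]; ring
  rw [Nat.choose_succ_self, Nat.cast_zero, mul_zero, zero_mul, sub_zero, ← hmoment] at hparts
  rw [← hparts, sum_div]
  refine sum_congr rfl fun k _ => ?_
  have hk : (k + 1 : K) ≠ 0 := k.cast_add_one_ne_zero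
  have habsorb : (n + 1 : K) * n.choose k = (n + 1).choose (k + 1) * (k + 1) := by
    exact_mod_cast Nat.add_one_mul_choose_eq n k
  rw [momentMahlerCoeff]
  field_simp
  linear_combination (∑ j ∈ range (k + 1), q ^ j * centralBeta K j) * habsorb

end CentralBeta

section MorganVoyce

variable {R : Type*} [CommRing R]

/-- The value at `a` of the Morgan-Voyce polynomial `B_{m-1}`, with `B_{-1} = 0`. It equals
`(ζᵐ - ζ⁻ᵐ) / (ζ - ζ⁻¹)` where `ζ + ζ⁻¹ = a + 2` and `ζ² ≠ 1`. -/
def morganVoyce (a : R) (m : ℕ) : R := ∑ k ∈ range m, a ^ k * (m + k).choose (2 * k + 1)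

lemma sum_range_morganVoyce (a : R) {m N : ℕ} (h : m ≤ N) :
    ∑ k ∈ range N, a ^ k * ((m + k).choose (2 * k + 1) : R) = morganVoyce a m := by
  refine (sum_subset (range_subset_range.mpr h) fun k _ hk => ?_).symm
  rw [mem_range, not_lt] at hk
  rw [Nat.choose_eq_zero_of_lt (by lia), Nat.cast_zero, mul_zero]

lemma morganVoyce_add_two (a : R) (m : ℕ) :
    morganVoyce a (m + 2) = (a + 2) * morganVoyce a (m + 1) - morganVoyce a m := by
  have hterm (k : ℕ) : a ^ (k + 1) * ((m + 2 + (k + 1)).choose (2 * (k + 1) + 1) : R)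
      = 2 * (a ^ (k + 1) * (m + 1 + (k + 1)).choose (2 * (k + 1) + 1))
        - a ^ (k + 1) * (m + (k + 1)).choose (2 * (k + 1) + 1)
        + a * (a ^ k * (m + 1 + k).choose (2 * k + 1)) := by
    have h := congrArg (Nat.cast : ℕ → R) (choose_add_two_add_choose (m + 1 + k) (2 * k + 1))
    simp only [show m + 2 + (k + 1) = m + 1 + k + 2 by lia,
      show m + 1 + (k + 1) = m + 1 + k + 1 by lia, show m + (k + 1) = m + 1 + k by lia,
      show 2 * (k + 1) + 1 = 2 * k + 1 + 2 by lia]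
    push_cast at h
    linear_combination a ^ (k + 1) * h
  have hsucc := sum_range_morganVoyce a (show m + 1 ≤ m + 2 by lia)
  have hself := sum_range_morganVoyce a (show m ≤ m + 2 by lia)
  rw [sum_range_succ'] at hsucc hself
  rw [morganVoyce, sum_range_succ']
  simp only [hterm, sum_add_distrib, sum_sub_distrib, ← mul_sum]
  rw [← morganVoyce]
  simp only [mul_zero, zero_add, add_zero, Nat.choose_one_right] at hsucc hself ⊢
  push_cast at hsucc hself ⊢
  linear_combination 2 * hsucc - hself

lemma morganVoyce_neg_three_three_mul (j : ℕ) : morganVoyce (-3 : R) (3 * j) = 0 := by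
  induction j with
  | zero => simp [morganVoyce]
  | succ j ih =>
    have h := morganVoyce_add_two (-3 : R) (3 * j)
    have h' := morganVoyce_add_two (-3 : R) (3 * j + 1)
    rw [Nat.mul_succ]
    linear_combination h' - h + ih

end MorganVoyce

lemma tendsto_natCast_mul_norm_sum_range {E : Type*} [SeminormedAddCommGroup E] {d : ℕ → E}
    (hd : HasSum d 0) (hsum : Summable fun k : ℕ => k * ‖d k‖) :
    Tendsto (fun n : ℕ => n * ‖∑ k ∈ range n, d k‖) atTop (𝓝 0) := by
  refine squeeze_zero (fun n => by positivity) (fun n => ?_)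
    (tendsto_sum_nat_add fun k : ℕ => k * ‖d k‖)
  rcases n.eq_zero_or_pos with rfl | hn
  · simpa using tsum_nonneg fun k : ℕ => (by positivity : 0 ≤ k * ‖d k‖)
  have htail : HasSum (fun k => d (k + n)) (-∑ k ∈ range n, d k) := by
    simpa using (hasSum_nat_add_iff' n).mpr hd
  have hbound := ((summable_nat_add_iff n).mpr hsum).hasSum.div_const (n : ℝ)
  have hle := htail.norm_le_of_bounded hbound fun k => by
    rw [le_div_iff₀ (by positivity), mul_comm]
    gcongr
    lia
  rwa [norm_neg, le_div_iff₀ (by positivity), mul_comm] at hle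

section Padic

variable {p : ℕ} [Fact p.Prime]

instance isBoundedSMul_padicInt_padic : IsBoundedSMul ℤ_[p] ℚ_[p] :=
  .of_norm_smul_le fun x y => (norm_mul (x : ℚ_[p]) y).le

lemma inv_norm_natCast_eq_pow_factorization {n : ℕ} (hn : n ≠ 0) :
    ‖(n : ℚ_[p])‖⁻¹ = (p : ℝ) ^ n.factorization p := by
  rw [Padic.norm_eq_zpow_neg_valuation (Nat.cast_ne_zero.mpr hn), Padic.valuation_natCast,
    Nat.factorization_def n Fact.out, zpow_neg, inv_inv, zpow_natCast]

lemma inv_norm_natCast_le {n : ℕ} (hn : n ≠ 0) : ‖(n : ℚ_[p])‖⁻¹ ≤ n := by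
  rw [inv_norm_natCast_eq_pow_factorization hn]
  exact_mod_cast Nat.ordProj_le p hn

lemma inv_norm_choose_le {n k : ℕ} (hn : n ≠ 0) (hk : k ≤ n) :
    ‖(n.choose k : ℚ_[p])‖⁻¹ ≤ n := by
  rw [inv_norm_natCast_eq_pow_factorization (Nat.choose_pos hk).ne']
  exact_mod_cast Nat.pow_factorization_choose_le hn.pos

lemma norm_centralBeta_le (k : ℕ) : ‖centralBeta ℚ_[p] k‖ ≤ (k + 1) * (2 * k + 1) := by
  have hsucc := inv_norm_natCast_le (p := p) (n := k + 1) k.succ_ne_zero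
  have hchoose := inv_norm_choose_le (p := p) (n := 2 * k + 1) (k := k) (by lia) (by lia)
  rw [centralBeta, two_mul_add_one_mul_centralBinom, Nat.cast_mul, norm_inv, norm_mul, mul_inv]
  push_cast at hsucc hchoose ⊢
  gcongr

lemma summable_mul_norm_pow_mul_centralBeta {q : ℚ_[p]} (hq : ‖q‖ < 1) :
    Summable fun k : ℕ => k * ‖q ^ k * centralBeta ℚ_[p] k‖ := by
  have hgeom (i : ℕ) := summable_pow_mul_geometric_of_norm_lt_one i (r := ‖q‖) (by simpa)
  refine .of_nonneg_of_le (fun k => by positivity) (fun k => ?_)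
    ((((hgeom 3).mul_left 2).add ((hgeom 2).mul_left 3)).add (hgeom 1))
  calc k * ‖q ^ k * centralBeta ℚ_[p] k‖
      ≤ k * (‖q‖ ^ k * ((k + 1) * (2 * k + 1))) := by
        rw [norm_mul, norm_pow]
        gcongr
        exact norm_centralBeta_le k
    _ = _ := by ring

lemma summable_norm_pow_mul_centralBeta {q : ℚ_[p]} (hq : ‖q‖ < 1) :
    Summable fun k : ℕ => ‖q ^ k * centralBeta ℚ_[p] k‖ :=
  (summable_nat_add_iff 1).mp <| .of_nonneg_of_le (fun _ => norm_nonneg _)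
    (fun k => le_mul_of_one_le_left (norm_nonneg _) (by simp))
    ((summable_nat_add_iff 1).mpr (summable_mul_norm_pow_mul_centralBeta hq))

/-- The truncated Euler sine product `∏_{1 ≤ i ≤ k} (1 - x² / i²)`, written with binomial
coefficients so that it is visibly continuous with values in `ℤ_[p]`. -/
noncomputable def sineProduct (p : ℕ) [Fact p.Prime] (k : ℕ) (x : ℤ_[p]) : ℤ_[p] :=
  (-1) ^ k * Ring.choose (x - 1) k * Ring.choose (x + k) k

lemma continuous_sineProduct (k : ℕ) : Continuous (sineProduct p k) := by
  unfold sineProduct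
  fun_prop

lemma sineProduct_zero (k : ℕ) : sineProduct p k 0 = 1 := by
  rw [sineProduct, zero_sub, Ring.choose_neg, zero_add, add_sub_cancel_left, Ring.choose_natCast]
  simp [Units.smul_def, ← mul_pow]

lemma sineProduct_natCast_succ (m k : ℕ) :
    sineProduct p k (m + 1 : ℕ) = (-1) ^ k * m.choose k * (m + 1 + k).choose k := by
  rw [sineProduct, ← Nat.cast_add, Nat.cast_succ, add_sub_cancel_right, Ring.choose_natCast,
    Ring.choose_natCast]

lemma centralBeta_mul_sineProduct {n : ℕ} (hn : n ≠ 0) (k : ℕ) :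
    centralBeta ℚ_[p] k * sineProduct p k n = (-1) ^ k * (n + k).choose (2 * k + 1) / n := by
  obtain ⟨m, rfl⟩ := Nat.exists_eq_succ_of_ne_zero hn
  have hm : ((m + 1 : ℕ) : ℚ_[p]) ≠ 0 := Nat.cast_ne_zero.mpr hn
  have hne := cast_two_mul_add_one_mul_centralBinom_ne_zero ℚ_[p] k
  have h := congrArg (Nat.cast : ℕ → ℚ_[p]) (succ_mul_choose_mul_choose_add m k)
  rw [sineProduct_natCast_succ, centralBeta, inv_mul_eq_div, div_eq_div_iff hne hm]
  push_cast at h ⊢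
  linear_combination (-1) ^ k * h

lemma tsum_pow_mul_centralBeta_mul_sineProduct (q : ℚ_[p]) {n : ℕ} (hn : n ≠ 0) :
    ∑' k, q ^ k * centralBeta ℚ_[p] k * sineProduct p k n = morganVoyce (-q) n / n := by
  have hterm (k : ℕ) : q ^ k * centralBeta ℚ_[p] k * sineProduct p k n
      = (-q) ^ k * (n + k).choose (2 * k + 1) / n := by
    rw [mul_assoc, centralBeta_mul_sineProduct hn, neg_pow]
    ring
  rw [tsum_congr hterm, tsum_eq_sum (s := range n) fun k hk => ?_, morganVoyce, sum_div]
  rw [mem_range, not_lt] at hk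
  rw [Nat.choose_eq_zero_of_lt (by lia), Nat.cast_zero, mul_zero, zero_div]

theorem tendsto_morganVoyce_div {q : ℚ_[p]} (hq : ‖q‖ < 1) {ι : Type*} {l : Filter ι} {u : ι → ℕ}
    (hu : ∀ i, u i ≠ 0) (hlim : Tendsto (fun i => (u i : ℤ_[p])) l (𝓝 0)) :
    Tendsto (fun i => morganVoyce (-q) (u i) / u i) l (𝓝 (∑' k, q ^ k * centralBeta ℚ_[p] k)) := by
  simp only [← tsum_pow_mul_centralBeta_mul_sineProduct q (hu _)]
  refine tendsto_tsum_of_dominated_convergence (summable_norm_pow_mul_centralBeta hq)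
    (fun k => ?_) (.of_forall fun i k => ?_)
  · have hcont : Continuous fun x : ℤ_[p] =>
        q ^ k * centralBeta ℚ_[p] k * (sineProduct p k x : ℚ_[p]) :=
      continuous_const.mul (continuous_subtype_val.comp (continuous_sineProduct k))
    simpa [sineProduct_zero, Function.comp_def] using (hcont.tendsto 0).comp hlim
  · rw [norm_mul]
    exact mul_le_of_le_one_right (norm_nonneg _) (sineProduct p k (u i)).norm_le_one

lemma tendsto_momentMahlerCoeff {q : ℚ_[p]} (hq : ‖q‖ < 1)
    (hzero : HasSum (fun k => q ^ k * centralBeta ℚ_[p] k) 0) :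
    Tendsto (momentMahlerCoeff q) atTop (𝓝 0) := by
  refine squeeze_zero_norm (fun k => ?_) ((tendsto_natCast_mul_norm_sum_range hzero
    (summable_mul_norm_pow_mul_centralBeta hq)).comp (tendsto_add_atTop_nat 1))
  have hinv := inv_norm_natCast_le (p := p) k.succ_ne_zero
  simp only [momentMahlerCoeff, Function.comp_apply, norm_div, norm_mul, norm_pow, norm_neg,
    norm_one, one_pow, one_mul, ← Nat.cast_succ]
  rw [div_eq_inv_mul]
  gcongr

lemma hasSum_three_pow_mul_centralBeta :
    HasSum (fun k => 3 ^ k * centralBeta ℚ_[3] k) 0 := by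
  have hthree : ‖(3 : ℚ_[3])‖ < 1 := Padic.norm_p_lt_one (p := 3)
  have hpow : Tendsto (fun s : ℕ => ((3 * 3 ^ s : ℕ) : ℤ_[3])) atTop (𝓝 0) := by
    simpa using (tendsto_pow_atTop_nhds_zero_of_norm_lt_one (x := (3 : ℤ_[3])) hthree).const_mul 3
  have hlim := tendsto_morganVoyce_div hthree (fun s => by positivity) hpow
  simp only [morganVoyce_neg_three_three_mul, zero_div] at hlim
  rw [tendsto_nhds_unique tendsto_const_nhds hlim]
  exact (summable_norm_pow_mul_centralBeta hthree).of_norm.hasSum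

end Padic

/-- The function `n ↦ (∑_{k=0}^{n-1} C(2k,k))/(n² C(2n,n))` on positive integers extends
to a continuous function `f₁ : ℤ₃ → ℚ₃`. -/
theorem stmt_16 :
    ∃ f₁ : C(ℤ_[3], ℚ_[3]), ∀ n : ℕ, 0 < n →
      f₁ (n : ℤ_[3]) =
        (((∑ k ∈ Finset.range n, (Nat.choose (2 * k) k : ℚ)) /
          ((n : ℚ) ^ 2 * (Nat.choose (2 * n) n : ℚ)) : ℚ) : ℚ_[3]) := by
  have hcoeff : Tendsto (momentMahlerCoeff (3 : ℚ_[3])) atTop (𝓝 0) :=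
    tendsto_momentMahlerCoeff (Padic.norm_p_lt_one (p := 3)) hasSum_three_pow_mul_centralBeta
  let g : C(ℤ_[3], ℚ_[3]) := PadicInt.mahlerSeries (momentMahlerCoeff 3)
  refine ⟨⟨fun x => 2⁻¹ * g (x - 1), by fun_prop⟩, fun n hn => ?_⟩
  obtain ⟨m, rfl⟩ := Nat.exists_eq_add_one.mpr hn
  have hg : g m = centralBetaMoment (-3) m / (m + 1) := by
    rw [PadicInt.mahlerSeries_apply_nat hcoeff le_rfl, ← sum_choose_mul_momentMahlerCoeff]
    simp only [nsmul_eq_mul]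
  have hvalue := sum_centralBinom_div_sq (K := ℚ_[3]) m
  simp only [Nat.centralBinom_eq_two_mul_choose] at hvalue
  push_cast
  rw [hvalue, ← hg]
  simp
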